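/- arXiv:2101.04940 — 2 statements merged into one kernel-verified Lean document; each statement's English description precedes it below -/
import Mathlib

section
/- For every integer ℓ ≥ 1 and every real ρ with 0 < ρ < 1 there exists a real α with 0 ≤ α < 1, depending only on ℓ and ρ, with the following property: for every Lebesgue-measurable set T ⊆ ℝ³ with B(0,ρ) ⊆ T ⊆ B(0,1), every real polynomial q in three variables of total degree at most ℓ+1, and every polynomial vector field p : ℝ³ → ℝ³ whose components have total degree at most ℓ−1, one has |∫_T ⟨∇q(x), x × p(x)⟩ dx| ≤ α (∫_T ‖∇q(x)‖² dx)^{1/2} (∫_T ‖x × p(x)‖² dx)^{1/2}. (This is the normalized, bilinear form of the uniform bound ‖π_{G}π_{Gᶜ}‖ ≤ α < 1 for the L²(T)-orthogonal projections onto the gradient space G^ℓ(T) = ∇P^{ℓ+1} and its Koszul complement Gᶜ,ℓ(T) = x × (P^{ℓ−1})³.) -/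
open MvPolynomial MeasureTheory
open scoped InnerProductSpace

/-- The cross product of two vectors of `ℝ³` (as elements of `EuclideanSpace ℝ (Fin 3)`). -/
noncomputable def crossVec (a b : EuclideanSpace ℝ (Fin 3)) : EuclideanSpace ℝ (Fin 3) :=
  (WithLp.equiv 2 (Fin 3 → ℝ)).symm
    ![a 1 * b 2 - a 2 * b 1, a 2 * b 0 - a 0 * b 2, a 0 * b 1 - a 1 * b 0]

/-- The gradient of a polynomial in three variables, evaluated at a point of `ℝ³`. -/
noncomputable def polyGrad (q : MvPolynomial (Fin 3) ℝ) (x : EuclideanSpace ℝ (Fin 3)) :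
    EuclideanSpace ℝ (Fin 3) :=
  (WithLp.equiv 2 (Fin 3 → ℝ)).symm fun i => eval (fun j => x j) (pderiv i q)

/-- Evaluation of a polynomial vector field at a point of `ℝ³`. -/
noncomputable def polyVecEval (p : Fin 3 → MvPolynomial (Fin 3) ℝ)
    (x : EuclideanSpace ℝ (Fin 3)) : EuclideanSpace ℝ (Fin 3) :=
  (WithLp.equiv 2 (Fin 3 → ℝ)).symm fun i => eval (fun j => x j) (p i)

/-!
A gradient field `∇q` that is tangential, i.e. satisfies `∑ xᵢ ∂ᵢq = 0`, vanishes by Euler's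
identity, while every Koszul field `x × p` is tangential. So the two spaces are disjoint and
finite-dimensional, and polynomial fields are determined by their values on `U = B(0,ρ)`. By
compactness `‖v‖_{L²(Ω)} ≤ K ‖v - w‖_{L²(U)}` for all gradients `v` and tangential fields `w`
of bounded degree, where `Ω = B(0,1)`. As `U ⊆ T ⊆ Ω`, this yields
`‖v‖_{L²(T)} ≤ K ‖v - t w‖_{L²(T)}` for every real `t`, and minimizing over `t` gives the
Cauchy–Schwarz inequality in `L²(T)` with the constant `√(1 - K⁻²)`, independent of `T`.
-/

open scoped Topology Matrix

section NormedSpace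

variable {E F : Type*}

theorem abs_inner_le_of_forall_norm_le_mul_norm_sub_smul [SeminormedAddCommGroup E]
    [InnerProductSpace ℝ E] {K : ℝ} {a b : E} (h : ∀ t : ℝ, ‖a‖ ≤ K * ‖a - t • b‖) :
    |⟪a, b⟫_ℝ| ≤ √(1 - (K ^ 2)⁻¹) * ‖a‖ * ‖b‖ := by
  have hquad (t : ℝ) :
      0 ≤ ‖b‖ ^ 2 * (t * t) + -(2 * ⟪a, b⟫_ℝ) * t + (1 - (K ^ 2)⁻¹) * ‖a‖ ^ 2 := by
    have hsq : (K ^ 2)⁻¹ * ‖a‖ ^ 2 ≤ ‖a - t • b‖ ^ 2 := by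
      refine inv_mul_le_of_le_mul₀ (sq_nonneg K) (sq_nonneg _) ?_
      rw [← mul_pow]
      exact pow_le_pow_left₀ (norm_nonneg a) (h t) 2
    rw [norm_sub_sq_real, real_inner_smul_right, norm_smul, mul_pow, Real.norm_eq_abs, sq_abs]
      at hsq
    linarith
  have hdiscrim := discrim_le_zero hquad
  rw [discrim] at hdiscrim
  calc |⟪a, b⟫_ℝ| ≤ √((1 - (K ^ 2)⁻¹) * (‖a‖ * ‖b‖) ^ 2) := Real.abs_le_sqrt (by linarith)
    _ = √(1 - (K ^ 2)⁻¹) * ‖a‖ * ‖b‖ := by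
      rw [Real.sqrt_mul' _ (sq_nonneg _), Real.sqrt_sq (by positivity), mul_assoc]

theorem exists_norm_le_mul_norm_sub_of_mem {𝕜 : Type*} [NontriviallyNormedField 𝕜]
    [CompleteSpace 𝕜] [NormedAddCommGroup E] [NormedSpace 𝕜 E] [FiniteDimensional 𝕜 E]
    [NormedAddCommGroup F] [NormedSpace 𝕜 F] (f : E →ₗ[𝕜] F) (W : Submodule 𝕜 F)
    [IsClosed (W : Set F)] (h : ∀ x, f x ∈ W → x = 0) :
    ∃ K > 0, ∀ x, ∀ w ∈ W, ‖x‖ ≤ K * ‖f x - w‖ := by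
  obtain ⟨K, hK, hfK⟩ := (W.mkQ ∘ₗ f).exists_antilipschitzWith <| by
    simpa [LinearMap.ker_eq_bot'] using h
  refine ⟨K, hK, fun x w hw => ?_⟩
  calc ‖x‖ ≤ K * ‖W.mkQ (f x)‖ := by simpa using hfK.le_mul_dist x 0
    _ = K * ‖W.mkQ (f x - w)‖ := by simp [(Submodule.Quotient.mk_eq_zero W).2 hw]
    _ ≤ K * ‖f x - w‖ := by gcongr; exact Submodule.Quotient.norm_mk_le W _

end NormedSpace

section Restriction

variable {X F : Type*} [MeasurableSpace X] {μ : Measure X} [NormedAddCommGroup F]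

theorem norm_LpToLpRestrictCLM_mono [NormedSpace ℝ F] {p : ENNReal} [Fact (1 ≤ p)] {S T : Set X}
    (hST : S ⊆ T) (f : Lp F p μ) :
    ‖LpToLpRestrictCLM X F ℝ μ p S f‖ ≤ ‖LpToLpRestrictCLM X F ℝ μ p T f‖ := by
  rw [Lp.norm_def, Lp.norm_def, eLpNorm_congr_ae (LpToLpRestrictCLM_coeFn ℝ S f),
    eLpNorm_congr_ae (LpToLpRestrictCLM_coeFn ℝ T f)]
  exact ENNReal.toReal_mono ((Lp.memLp f).restrict T).eLpNorm_ne_top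
    (eLpNorm_mono_measure f (Measure.restrict_mono_set μ hST))

variable [InnerProductSpace ℝ F]

theorem inner_LpToLpRestrictCLM_toLp {f g : X → F} (hf : MemLp f 2 μ) (hg : MemLp g 2 μ)
    (T : Set X) :
    ⟪LpToLpRestrictCLM X F ℝ μ 2 T (hf.toLp f), LpToLpRestrictCLM X F ℝ μ 2 T (hg.toLp g)⟫_ℝ =
      ∫ x in T, ⟪f x, g x⟫_ℝ ∂μ := by
  rw [L2.inner_def]
  refine integral_congr_ae ?_
  filter_upwards [LpToLpRestrictCLM_coeFn ℝ T (hf.toLp f), LpToLpRestrictCLM_coeFn ℝ T (hg.toLp g),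
    ae_restrict_of_ae hf.coeFn_toLp, ae_restrict_of_ae hg.coeFn_toLp] with x hrf hrg hfx hgx
  rw [hrf, hrg, hfx, hgx]

theorem norm_LpToLpRestrictCLM_toLp {f : X → F} (hf : MemLp f 2 μ) (T : Set X) :
    ‖LpToLpRestrictCLM X F ℝ μ 2 T (hf.toLp f)‖ = √(∫ x in T, ‖f x‖ ^ 2 ∂μ) := by
  simp_rw [norm_eq_sqrt_real_inner (LpToLpRestrictCLM X F ℝ μ 2 T (hf.toLp f)),
    inner_LpToLpRestrictCLM_toLp, real_inner_self_eq_norm_sq]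

theorem exists_abs_inner_LpToLpRestrictCLM_le (U : Set X) (V W : Submodule ℝ (Lp F 2 μ))
    [FiniteDimensional ℝ V] [FiniteDimensional ℝ W]
    (h : ∀ f ∈ V, ∀ g ∈ W, f =ᵐ[μ.restrict U] g → f = 0) :
    ∃ α : ℝ, 0 ≤ α ∧ α < 1 ∧ ∀ T, U ⊆ T → ∀ f ∈ V, ∀ g ∈ W,
      |⟪LpToLpRestrictCLM X F ℝ μ 2 T f, LpToLpRestrictCLM X F ℝ μ 2 T g⟫_ℝ| ≤
        α * ‖LpToLpRestrictCLM X F ℝ μ 2 T f‖ * ‖LpToLpRestrictCLM X F ℝ μ 2 T g‖ := by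
  let r (S : Set X) := LpToLpRestrictCLM X F ℝ μ 2 S
  have hclosed : IsClosed (W.map (r U).toLinearMap : Set (Lp F 2 (μ.restrict U))) :=
    Submodule.closed_of_finiteDimensional _
  obtain ⟨K, hK, hVW⟩ := exists_norm_le_mul_norm_sub_of_mem ((r U).toLinearMap ∘ₗ V.subtype)
    (W.map (r U).toLinearMap) <| by
      rintro ⟨f, hf⟩ ⟨g, hg, hgf : r U g = r U f⟩
      have hae : f =ᵐ[μ.restrict U] g :=
        (LpToLpRestrictCLM_coeFn ℝ U f).symm.trans
          ((Lp.ext_iff.1 hgf.symm).trans (LpToLpRestrictCLM_coeFn ℝ U g))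
      exact Subtype.ext (h f hf g hg hae)
  refine ⟨√(1 - (K ^ 2)⁻¹), Real.sqrt_nonneg _, ?_, fun T hUT f hf g hg => ?_⟩
  · rw [Real.sqrt_lt' one_pos]
    linarith [inv_pos.2 (pow_pos hK 2)]
  refine abs_inner_le_of_forall_norm_le_mul_norm_sub_smul fun t => ?_
  calc ‖r T f‖ ≤ ‖f‖ := norm_Lp_toLp_restrict_le T f
    _ ≤ K * ‖r U f - r U (t • g)‖ :=
      hVW ⟨f, hf⟩ _ (Submodule.mem_map_of_mem (W.smul_mem t hg))
    _ = K * ‖r U (f - t • g)‖ := by rw [map_sub]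
    _ ≤ K * ‖r T (f - t • g)‖ := by gcongr; exact norm_LpToLpRestrictCLM_mono hUT _
    _ = K * ‖r T f - t • r T g‖ := by rw [map_sub, map_smul]

end Restriction

section Continuous

variable {X F : Type*} [PseudoMetricSpace X] [ProperSpace X] [MeasurableSpace X]
  [OpensMeasurableSpace X] [NormedAddCommGroup F] [SecondCountableTopologyEither X F]
  (μ : Measure X) [IsFiniteMeasureOnCompacts μ] {Ω : Set X}

theorem memLp_restrict_of_isBounded_of_continuous (hΩ : Bornology.IsBounded Ω) (p : ENNReal)
    {f : X → F} (hf : Continuous f) : MemLp f p (μ.restrict Ω) := by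
  have : IsFiniteMeasure (μ.restrict Ω) := isFiniteMeasure_restrict.2 hΩ.measure_lt_top.ne
  obtain ⟨C, hC⟩ := hΩ.isCompact_closure.exists_bound_of_continuousOn hf.continuousOn
  have hbound : ∀ᵐ x ∂μ.restrict (closure Ω), ‖f x‖ ≤ C :=
    (ae_restrict_mem isClosed_closure.measurableSet).mono hC
  exact MemLp.of_bound hf.aestronglyMeasurable C
    (ae_restrict_of_ae_restrict_of_subset subset_closure hbound)

/-- Restriction of continuous functions to a bounded set `Ω`, as a linear map into `Lᵖ(Ω)`. It
serves to view spaces of polynomial vector fields as subspaces of `L²(Ω)`. -/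
noncomputable def continuousMapToLp (hΩ : Bornology.IsBounded Ω) (p : ENNReal) (𝕜 : Type*)
    [NormedField 𝕜] [NormedSpace 𝕜 F] : C(X, F) →ₗ[𝕜] Lp F p (μ.restrict Ω) where
  toFun f := (memLp_restrict_of_isBounded_of_continuous μ hΩ p f.continuous).toLp f
  map_add' _ _ := rfl
  map_smul' _ _ := rfl

end Continuous

section Polynomial

variable {σ R : Type*}

theorem eq_of_eventually_eval_eq [CommRing R] [IsDomain R] [TopologicalSpace R] [T1Space R]
    [∀ a : R, (𝓝[≠] a).NeBot] {p q : MvPolynomial σ R} {x : σ → R}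
    (h : ∀ᶠ y in 𝓝 x, eval y p = eval y q) : p = q := by
  rw [nhds_pi] at h
  obtain ⟨I, t, ht, hsub⟩ := Filter.mem_pi'.1 h
  exact funext_set t (fun i => infinite_of_mem_nhds (x i) (ht i)) fun y hy =>
    hsub fun i _ => hy i trivial

theorem coeff_sum_X_mul_pderiv [Fintype σ] [CommSemiring R] (q : MvPolynomial σ R) (m : σ →₀ ℕ) :
    coeff m (∑ i, X i * pderiv i q) = m.degree • coeff m q := by
  classical
  induction q using MvPolynomial.induction_on' with
  | monomial u a =>
    simp_rw [X_mul_pderiv_monomial, ← Finset.sum_smul, coeff_smul, coeff_monomial,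
      Finsupp.degree_eq_sum]
    split_ifs with h
    · rw [h]
    · rw [smul_zero, smul_zero]
  | add p q hp hq =>
    simp only [map_add, mul_add, Finset.sum_add_distrib, coeff_add, hp, hq, smul_add]

theorem eq_C_of_sum_X_mul_pderiv_eq_zero [Fintype σ] [CommSemiring R] [IsAddTorsionFree R]
    {q : MvPolynomial σ R} (h : ∑ i, X i * pderiv i q = 0) : q = C (coeff 0 q) := by
  classical
  ext m
  rw [coeff_C]
  split_ifs with hm
  · rw [hm]
  · have hdeg : m.degree • coeff m q = 0 := by rw [← coeff_sum_X_mul_pderiv, h, coeff_zero]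
    exact (smul_eq_zero.1 hdeg).resolve_left fun h0 => hm ((Finsupp.degree_eq_zero_iff m).1 h0).symm

/-- The gradient `∇q` of a polynomial as a polynomial vector field; `polyGrad` is its evaluation
in three variables. -/
noncomputable def gradField [CommSemiring R] : MvPolynomial σ R →ₗ[R] σ → MvPolynomial σ R :=
  LinearMap.pi fun i => (pderiv i).toLinearMap

theorem totalDegree_X_cross_le [CommRing R] [Nontrivial R] {p : Fin 3 → MvPolynomial (Fin 3) R}
    {n : ℕ} (hp : ∀ i, (p i).totalDegree ≤ n) (i : Fin 3) :
    ((X ⨯₃ p) i).totalDegree ≤ 1 + n := by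
  have hmul (j k : Fin 3) : (X j * p k).totalDegree ≤ 1 + n :=
    (totalDegree_mul _ _).trans (add_le_add (totalDegree_X j).le (hp k))
  have hsub (j k l m : Fin 3) : (X j * p k - X l * p m).totalDegree ≤ 1 + n :=
    (totalDegree_sub _ _).trans (max_le (hmul j k) (hmul l m))
  fin_cases i <;> exact hsub _ _ _ _

end Polynomial

section PolynomialField

variable {σ κ : Type*} [Fintype κ]

/-- The continuous map between Euclidean spaces defined by a tuple of polynomials, linearly in the
tuple. It generalizes `polyVecEval` to arbitrarily many variables and finitely many components. -/
noncomputable def evalField :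
    (κ → MvPolynomial σ ℝ) →ₗ[ℝ] C(EuclideanSpace ℝ σ, EuclideanSpace ℝ κ) where
  toFun v :=
    { toFun := fun x => WithLp.toLp 2 fun i => eval x.ofLp (v i)
      continuous_toFun := (PiLp.continuous_toLp 2 _).comp <| continuous_pi fun i =>
        (MvPolynomial.continuous_eval (v i)).comp (PiLp.continuous_ofLp 2 _) }
  map_add' v w := by ext x i; simp
  map_smul' c v := by ext x i; simp

theorem polyGrad_eq_evalField (q : MvPolynomial (Fin 3) ℝ) (x : EuclideanSpace ℝ (Fin 3)) :
    polyGrad q x = evalField (gradField q) x :=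
  rfl

theorem crossVec_polyVecEval (p : Fin 3 → MvPolynomial (Fin 3) ℝ) (x : EuclideanSpace ℝ (Fin 3)) :
    crossVec x (polyVecEval p x) = evalField (X ⨯₃ p) x := by
  ext i
  fin_cases i <;> simp [crossVec, polyVecEval, evalField, cross_apply]

theorem eq_of_eqOn_evalField {v w : κ → MvPolynomial σ ℝ} {U : Set (EuclideanSpace ℝ σ)}
    (hU : IsOpen U) (hne : U.Nonempty) (h : Set.EqOn (evalField v) (evalField w) U) : v = w := by
  obtain ⟨x, hx⟩ := hne
  have hnhds : ∀ᶠ y in 𝓝 x.ofLp, WithLp.toLp 2 y ∈ U :=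
    (PiLp.continuous_toLp 2 _).continuousAt.eventually_mem (hU.mem_nhds hx)
  exact funext fun i => eq_of_eventually_eval_eq <| hnhds.mono fun y hy =>
    congrArg (fun z => z i) (h hy)

theorem exists_abs_setIntegral_inner_evalField_le [Finite σ] (μ : Measure (EuclideanSpace ℝ σ))
    [IsFiniteMeasureOnCompacts μ] [μ.IsOpenPosMeasure] {U Ω : Set (EuclideanSpace ℝ σ)}
    (hU : IsOpen U) (hne : U.Nonempty) (hΩ : Bornology.IsBounded Ω)
    {V W : Submodule ℝ (κ → MvPolynomial σ ℝ)} [FiniteDimensional ℝ V] [FiniteDimensional ℝ W]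
    (hVW : Disjoint V W) :
    ∃ α : ℝ, 0 ≤ α ∧ α < 1 ∧ ∀ T, U ⊆ T → T ⊆ Ω → ∀ v ∈ V, ∀ w ∈ W,
      |∫ x in T, ⟪evalField v x, evalField w x⟫_ℝ ∂μ| ≤
        α * √(∫ x in T, ‖evalField v x‖ ^ 2 ∂μ) * √(∫ x in T, ‖evalField w x‖ ^ 2 ∂μ) := by
  cases nonempty_fintype σ
  by_cases hUΩ : U ⊆ Ω
  swap
  · exact ⟨0, le_rfl, one_pos, fun T hUT hTΩ => absurd (hUT.trans hTΩ) hUΩ⟩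
  have hmem (v : κ → MvPolynomial σ ℝ) : MemLp (evalField v) 2 (μ.restrict Ω) :=
    memLp_restrict_of_isBounded_of_continuous μ hΩ 2 (evalField v).continuous
  let L : (κ → MvPolynomial σ ℝ) →ₗ[ℝ] Lp (EuclideanSpace ℝ κ) 2 (μ.restrict Ω) :=
    continuousMapToLp μ hΩ 2 ℝ ∘ₗ evalField
  have hL (v : κ → MvPolynomial σ ℝ) : L v = (hmem v).toLp (evalField v) := rfl
  have hLU (v : κ → MvPolynomial σ ℝ) : L v =ᵐ[μ.restrict U] evalField v :=
    ae_restrict_of_ae_restrict_of_subset hUΩ (hmem v).coeFn_toLp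
  obtain ⟨α, hα0, hα1, hα⟩ := exists_abs_inner_LpToLpRestrictCLM_le U (V.map L) (W.map L) <| by
    rintro _ ⟨v, hv, rfl⟩ _ ⟨w, hw, rfl⟩ hae
    rw [Measure.restrict_restrict_of_subset hUΩ] at hae
    have hvw : evalField v =ᵐ[μ.restrict U] evalField w := (hLU v).symm.trans (hae.trans (hLU w))
    have heq : v = w := eq_of_eqOn_evalField hU hne <| Measure.eqOn_open_of_ae_eq hvw hU
      (evalField v).continuous.continuousOn (evalField w).continuous.continuousOn
    rw [Submodule.disjoint_def.1 hVW v hv (heq ▸ hw), map_zero]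
  refine ⟨α, hα0, hα1, fun T hUT hTΩ v hv w hw => ?_⟩
  have hT := hα T hUT (L v) (Submodule.mem_map_of_mem hv) (L w) (Submodule.mem_map_of_mem hw)
  rwa [hL, hL, inner_LpToLpRestrictCLM_toLp, norm_LpToLpRestrictCLM_toLp,
    norm_LpToLpRestrictCLM_toLp, Measure.restrict_restrict_of_subset hTΩ] at hT

end PolynomialField

theorem grad_koszul_projection_bound_general {ι : Type*} [Fintype ι]
    (μ : Measure (EuclideanSpace ℝ ι)) [IsFiniteMeasureOnCompacts μ] [μ.IsOpenPosMeasure]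
    {U Ω : Set (EuclideanSpace ℝ ι)} (hU : IsOpen U) (hne : U.Nonempty)
    (hΩ : Bornology.IsBounded Ω) (m n : ℕ) :
    ∃ α : ℝ, 0 ≤ α ∧ α < 1 ∧ ∀ T, U ⊆ T → T ⊆ Ω →
      ∀ q : MvPolynomial ι ℝ, q.totalDegree ≤ m →
      ∀ v : ι → MvPolynomial ι ℝ, (∀ i, (v i).totalDegree ≤ n) → X ⬝ᵥ v = 0 →
        |∫ x in T, ⟪evalField (gradField q) x, evalField v x⟫_ℝ ∂μ| ≤
          α * √(∫ x in T, ‖evalField (gradField q) x‖ ^ 2 ∂μ) *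
            √(∫ x in T, ‖evalField v x‖ ^ 2 ∂μ) := by
  let V := (restrictTotalDegree ι ℝ m).map gradField
  let W := LinearMap.range ((restrictTotalDegree ι ℝ n).subtype.compLeft ι) ⊓
    LinearMap.ker (dotProductBilin ℝ ℝ (X : ι → MvPolynomial ι ℝ))
  have hVW : Disjoint V W := by
    rw [Submodule.disjoint_def]
    rintro _ ⟨q, -, rfl⟩ ⟨-, hq⟩
    rw [eq_C_of_sum_X_mul_pderiv_eq_zero hq]
    exact funext fun _ => pderiv_C
  obtain ⟨α, hα0, hα1, hα⟩ := exists_abs_setIntegral_inner_evalField_le μ hU hne hΩ hVW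
  refine ⟨α, hα0, hα1, fun T hUT hTΩ q hq v hv hXv => hα T hUT hTΩ _ ?_ v ?_⟩
  · exact Submodule.mem_map_of_mem ((mem_restrictTotalDegree ι m q).2 hq)
  · exact ⟨⟨fun i => ⟨v i, (mem_restrictTotalDegree ι n (v i)).2 (hv i)⟩, rfl⟩, hXv⟩

/-- Uniform bound `‖π_G π_{Gᶜ}‖ ≤ α < 1` for the `L²(T)`-orthogonal
projections onto the gradient space `G^ℓ(T) = ∇P^{ℓ+1}` and its Koszul complement
`Gᶜ,ℓ(T) = x × (P^{ℓ−1})³`, in normalized bilinear form: for every measurable `T` with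
`B(0,ρ) ⊆ T ⊆ B(0,1)`, every polynomial `q` of total degree `≤ ℓ+1` and every polynomial
vector field `p` of component degree `≤ ℓ−1`,
`|∫_T ⟨∇q, x × p⟩| ≤ α (∫_T ‖∇q‖²)^{1/2} (∫_T ‖x × p‖²)^{1/2}`. -/
theorem grad_koszul_projection_bound (ℓ : ℕ) (hℓ : 1 ≤ ℓ) (ρ : ℝ) (hρ0 : 0 < ρ) (hρ1 : ρ < 1) :
    ∃ α : ℝ, 0 ≤ α ∧ α < 1 ∧
      ∀ T : Set (EuclideanSpace ℝ (Fin 3)), MeasurableSet T →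
        Metric.ball 0 ρ ⊆ T → T ⊆ Metric.ball 0 1 →
        ∀ q : MvPolynomial (Fin 3) ℝ, q.totalDegree ≤ ℓ + 1 →
        ∀ p : Fin 3 → MvPolynomial (Fin 3) ℝ, (∀ i, (p i).totalDegree ≤ ℓ - 1) →
          abs (∫ x in T, ⟪polyGrad q x, crossVec x (polyVecEval p x)⟫_ℝ) ≤
            α * Real.sqrt (∫ x in T, ‖polyGrad q x‖ ^ 2) *
              Real.sqrt (∫ x in T, ‖crossVec x (polyVecEval p x)‖ ^ 2) := by
  obtain ⟨α, hα0, hα1, hα⟩ := grad_koszul_projection_bound_general (ι := Fin 3) volume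
    Metric.isOpen_ball (Metric.nonempty_ball.2 hρ0) Metric.isBounded_ball (ℓ + 1) (1 + (ℓ - 1))
  exact ⟨α, hα0, hα1, fun T _ hρT hT1 q hq p hp => by
    simpa only [polyGrad_eq_evalField, crossVec_polyVecEval] using
      hα T hρT hT1 q hq (X ⨯₃ p) (totalDegree_X_cross_le hp) (dot_self_cross X p)⟩
end

section
/- For every integer ℓ ≥ 1 and every real ρ with 0 < ρ < 1 there exists a real α with 0 ≤ α < 1, depending only on ℓ and ρ, with the following property: for every Lebesgue-measurable set T ⊆ ℝ³ with B(0,ρ) ⊆ T ⊆ B(0,1), every polynomial vector field w : ℝ³ → ℝ³ whose components have total degree at most ℓ+1, and every real polynomial r in three variables of total degree at most ℓ−1, one has |∫_T ⟨curl w(x), r(x) x⟩ dx| ≤ α (∫_T ‖curl w(x)‖² dx)^{1/2} (∫_T ‖r(x) x‖² dx)^{1/2}. (This is the normalized, bilinear form of the uniform bound ‖π_{R}π_{Rᶜ}‖ ≤ α < 1 for the L²(T)-orthogonal projections onto the curl space R^ℓ(T) = curl (P^{ℓ+1})³ and its Koszul complement Rᶜ,ℓ(T) = x P^{ℓ−1}.)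 -/
open MvPolynomial MeasureTheory
open scoped InnerProductSpace

/-- The curl of a polynomial vector field on `ℝ³`, as a polynomial vector field. -/
noncomputable def polyCurl (w : Fin 3 → MvPolynomial (Fin 3) ℝ) :
    Fin 3 → MvPolynomial (Fin 3) ℝ :=
  ![pderiv 1 (w 2) - pderiv 2 (w 1),
    pderiv 2 (w 0) - pderiv 0 (w 2),
    pderiv 0 (w 1) - pderiv 1 (w 0)]

/-!
On `ℝ^d` the divergence of `r x` is `(d + E) r`, with `E` the Euler operator, which multiplies every
monomial of degree `k` by `k`. Hence a nonzero field `r x` is never divergence free, and a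
finite-dimensional space `V` of divergence-free fields meets a finite-dimensional space `W` of
fields `r x` only in `0`. On `V + W` the `L²` norm over a small open set `U`, which is a norm by the
identity theorem, controls the `L²` norm over a large bounded set `K`. So the `L²(μ)` distance from
`w ∈ W` to `V` is at least a fixed fraction of the norm of `w`, uniformly in the measures `μ`
between the two, and this is a strengthened Cauchy–Schwarz inequality.
-/

section StrengthenedCauchySchwarz

theorem exists_pos_mul_norm_le_norm_of_ker_le {𝕜 E F G : Type*} [NontriviallyNormedField 𝕜]
    [CompleteSpace 𝕜] [AddCommGroup E] [Module 𝕜 E] [FiniteDimensional 𝕜 E]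
    [NormedAddCommGroup F] [NormedSpace 𝕜 F] [SeminormedAddCommGroup G] [NormedSpace 𝕜 G]
    (A : E →ₗ[𝕜] F) (B : E →ₗ[𝕜] G) (h : A.ker ≤ B.ker) :
    ∃ δ : ℝ, 0 < δ ∧ ∀ e, δ * ‖B e‖ ≤ ‖A e‖ := by
  let g : A.range →L[𝕜] G := LinearMap.toContinuousLinearMap
    (A.ker.liftQ B h ∘ₗ A.quotKerEquivRange.symm.toLinearMap)
  have hg (e : E) : g ⟨A e, A.mem_range_self e⟩ = B e := by
    simp [g, LinearMap.quotKerEquivRange_symm_apply_image]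
  have hpos : 0 < ‖g‖ + 1 := by positivity
  refine ⟨(‖g‖ + 1)⁻¹, inv_pos.mpr hpos, fun e => (inv_mul_le_iff₀ hpos).mpr ?_⟩
  calc ‖B e‖ ≤ ‖g‖ * ‖A e‖ := by simpa [hg] using g.le_opNorm ⟨A e, A.mem_range_self e⟩
    _ ≤ (‖g‖ + 1) * ‖A e‖ := by gcongr; linarith

theorem abs_real_inner_le_of_mul_norm_le_norm_smul_sub {H : Type*} [SeminormedAddCommGroup H]
    [InnerProductSpace ℝ H] {u v : H} {δ : ℝ} (hδ : 0 ≤ δ)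
    (h : ∀ t : ℝ, δ * ‖v‖ ≤ ‖t • u - v‖) :
    |⟪u, v⟫_ℝ| ≤ √(1 - δ ^ 2) * ‖u‖ * ‖v‖ := by
  have hquad (t : ℝ) :
      0 ≤ ‖u‖ ^ 2 * (t * t) + (-2 * ⟪u, v⟫_ℝ) * t + (1 - δ ^ 2) * ‖v‖ ^ 2 := by
    have hsq : (δ * ‖v‖) ^ 2 ≤ ‖t • u - v‖ ^ 2 := by gcongr; exact h t
    rw [norm_sub_sq_real, norm_smul, real_inner_smul_left, mul_pow, mul_pow, Real.norm_eq_abs,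
      sq_abs] at hsq
    linarith
  have hdiscrim := discrim_le_zero hquad
  rw [discrim] at hdiscrim
  calc |⟪u, v⟫_ℝ| ≤ √((1 - δ ^ 2) * (‖u‖ * ‖v‖) ^ 2) := Real.abs_le_sqrt (by linarith)
    _ = √(1 - δ ^ 2) * ‖u‖ * ‖v‖ := by
      rw [Real.sqrt_mul' _ (sq_nonneg _), Real.sqrt_sq (by positivity), mul_assoc]

universe u

theorem exists_uniform_abs_real_inner_le_of_disjoint {E F G : Type*} [AddCommGroup E] [Module ℝ E]
    [NormedAddCommGroup F] [NormedSpace ℝ F] [SeminormedAddCommGroup G] [NormedSpace ℝ G]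
    {V W : Submodule ℝ E} [FiniteDimensional ℝ V] [FiniteDimensional ℝ W] (hVW : Disjoint V W)
    {L₀ : E →ₗ[ℝ] F} (hL₀ : Function.Injective L₀) (L₁ : E →ₗ[ℝ] G) :
    ∃ α : ℝ, 0 ≤ α ∧ α < 1 ∧
      ∀ {H : Type u} [SeminormedAddCommGroup H] [InnerProductSpace ℝ H] (L : E →ₗ[ℝ] H),
        (∀ e, ‖L₀ e‖ ≤ ‖L e‖) → (∀ e, ‖L e‖ ≤ ‖L₁ e‖) →
        ∀ v ∈ V, ∀ w ∈ W, |⟪L v, L w⟫_ℝ| ≤ α * ‖L v‖ * ‖L w‖ := by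
  let A : V × W →ₗ[ℝ] F := L₀ ∘ₗ V.subtype.coprod (-W.subtype)
  let B : V × W →ₗ[ℝ] G := L₁ ∘ₗ W.subtype ∘ₗ LinearMap.snd ℝ V W
  have hA (e : V × W) : A e = L₀ (e.1 - e.2) := by simp [A, sub_eq_add_neg]
  have hker : A.ker ≤ B.ker := by
    rintro ⟨⟨v, hv⟩, ⟨w, hw⟩⟩ h
    rw [LinearMap.mem_ker, hA, map_eq_zero_iff L₀ hL₀, sub_eq_zero] at h
    obtain rfl : v = w := h
    have hv₀ : v = 0 := Submodule.disjoint_def.mp hVW v hv hw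
    simp [B, hv₀]
  obtain ⟨δ, hδ, hAB⟩ := exists_pos_mul_norm_le_norm_of_ker_le A B hker
  refine ⟨√(1 - δ ^ 2), Real.sqrt_nonneg _, ?_, fun {H} _ _ L h₀ h₁ v hv w hw => ?_⟩
  · rw [Real.sqrt_lt' one_pos, one_pow, sub_lt_self_iff]
    positivity
  · refine abs_real_inner_le_of_mul_norm_le_norm_smul_sub hδ.le fun t => ?_
    calc δ * ‖L w‖ ≤ δ * ‖L₁ w‖ := by gcongr; exact h₁ w
      _ ≤ ‖L₀ (t • v - w)‖ := by simpa [hA, B] using hAB (⟨t • v, V.smul_mem t hv⟩, ⟨w, hw⟩)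
      _ ≤ ‖t • L v - L w‖ := by simpa using h₀ (t • v - w)

end StrengthenedCauchySchwarz

section LinearMapToLp

open scoped ENNReal

variable {X E F : Type*} [MeasurableSpace X] [AddCommGroup E] [NormedAddCommGroup F]

/-- A linear family of `p`-integrable functions, as a linear map into `Lᵖ`. -/
noncomputable def linearMapToLp {𝕜 : Type*} [NormedRing 𝕜] [Module 𝕜 E] [Module 𝕜 F]
    [IsBoundedSMul 𝕜 F] {p : ℝ≥0∞} {μ : Measure X} (f : E →ₗ[𝕜] X → F)
    (hf : ∀ e, MemLp (f e) p μ) : E →ₗ[𝕜] Lp F p μ where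
  toFun e := (hf e).toLp
  map_add' e₁ e₂ := by
    rw [← MemLp.toLp_add]
    exact MemLp.toLp_congr _ _ (by rw [map_add])
  map_smul' c e := by
    rw [RingHom.id_apply, ← MemLp.toLp_const_smul]
    exact MemLp.toLp_congr _ _ (by rw [map_smul])

theorem linearMapToLp_injective {𝕜 : Type*} [NormedRing 𝕜] [Module 𝕜 E] [Module 𝕜 F]
    [IsBoundedSMul 𝕜 F] {p : ℝ≥0∞} {μ : Measure X} {f : E →ₗ[𝕜] X → F}
    (hf : ∀ e, MemLp (f e) p μ) (hinj : ∀ e, f e =ᵐ[μ] 0 → e = 0) :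
    Function.Injective (linearMapToLp f hf) := by
  refine (injective_iff_map_eq_zero _).mpr fun e he => hinj e ?_
  rwa [← MemLp.toLp_eq_toLp_iff (hf e) MemLp.zero, MemLp.toLp_zero]

theorem norm_linearMapToLp_le_of_measure_le {𝕜 : Type*} [NormedRing 𝕜] [Module 𝕜 E] [Module 𝕜 F]
    [IsBoundedSMul 𝕜 F] {p : ℝ≥0∞} {μ ν : Measure X} {f : E →ₗ[𝕜] X → F} (hνμ : ν ≤ μ)
    (hν : ∀ e, MemLp (f e) p ν) (hμ : ∀ e, MemLp (f e) p μ) (e : E) :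
    ‖linearMapToLp f hν e‖ ≤ ‖linearMapToLp f hμ e‖ := by
  simp only [linearMapToLp, LinearMap.coe_mk, AddHom.coe_mk, Lp.norm_toLp]
  exact ENNReal.toReal_mono (hμ e).eLpNorm_ne_top (eLpNorm_mono_measure _ hνμ)

variable [Module ℝ E] [InnerProductSpace ℝ F] {f : E →ₗ[ℝ] X → F}

theorem inner_linearMapToLp {μ : Measure X} (hf : ∀ e, MemLp (f e) 2 μ) (e₁ e₂ : E) :
    ⟪linearMapToLp f hf e₁, linearMapToLp f hf e₂⟫_ℝ = ∫ x, ⟪f e₁ x, f e₂ x⟫_ℝ ∂μ := by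
  rw [L2.inner_def]
  refine integral_congr_ae ?_
  filter_upwards [(hf e₁).coeFn_toLp, (hf e₂).coeFn_toLp] with x h₁ h₂
  simp only [linearMapToLp, LinearMap.coe_mk, AddHom.coe_mk, h₁, h₂]

theorem norm_linearMapToLp_two {μ : Measure X} (hf : ∀ e, MemLp (f e) 2 μ) (e : E) :
    ‖linearMapToLp f hf e‖ = √(∫ x, ‖f e x‖ ^ 2 ∂μ) := by
  rw [norm_eq_sqrt_real_inner, inner_linearMapToLp]
  simp only [real_inner_self_eq_norm_sq]

theorem exists_uniform_abs_integral_inner_le_of_disjoint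
    {V W : Submodule ℝ E} [FiniteDimensional ℝ V] [FiniteDimensional ℝ W] (hVW : Disjoint V W)
    {μ₀ μ₁ : Measure X} (hμ : μ₀ ≤ μ₁) (hf : ∀ e, MemLp (f e) 2 μ₁)
    (hinj : ∀ e, f e =ᵐ[μ₀] 0 → e = 0) :
    ∃ α : ℝ, 0 ≤ α ∧ α < 1 ∧ ∀ μ : Measure X, μ₀ ≤ μ → μ ≤ μ₁ → ∀ v ∈ V, ∀ w ∈ W,
      |∫ x, ⟪f v x, f w x⟫_ℝ ∂μ| ≤
        α * √(∫ x, ‖f v x‖ ^ 2 ∂μ) * √(∫ x, ‖f w x‖ ^ 2 ∂μ) := by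
  obtain ⟨α, hα₀, hα₁, hα⟩ := exists_uniform_abs_real_inner_le_of_disjoint hVW
    (linearMapToLp_injective (fun e => (hf e).mono_measure hμ) hinj) (linearMapToLp f hf)
  refine ⟨α, hα₀, hα₁, fun μ h₀ h₁ v hv w hw => ?_⟩
  have hfμ (e : E) : MemLp (f e) 2 μ := (hf e).mono_measure h₁
  simpa only [inner_linearMapToLp, norm_linearMapToLp_two] using
    hα (linearMapToLp f hfμ) (norm_linearMapToLp_le_of_measure_le h₀ _ _)
      (norm_linearMapToLp_le_of_measure_le h₁ _ _) v hv w hw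

end LinearMapToLp

section DivergenceAndKoszul

variable {ι R : Type*} [CommSemiring R]

theorem pderiv_pderiv_comm (i j : ι) (p : MvPolynomial ι R) :
    pderiv i (pderiv j p) = pderiv j (pderiv i p) := by
  rcases eq_or_ne i j with rfl | hij
  · rfl
  · ext m
    simp [coeff_pderiv, hij, hij.symm, add_right_comm, mul_right_comm]

/-- The Koszul operator `r ↦ r x`, from polynomials to polynomial vector fields. -/
noncomputable def polyKoszul : MvPolynomial ι R →ₗ[R] ι → MvPolynomial ι R :=
  LinearMap.pi fun i => LinearMap.mulRight R (X i)

variable [Fintype ι]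

/-- The divergence of a polynomial vector field. -/
noncomputable def polyDiv : (ι → MvPolynomial ι R) →ₗ[R] MvPolynomial ι R :=
  ∑ i, (pderiv i).toLinearMap ∘ₗ LinearMap.proj i

theorem polyDiv_apply (p : ι → MvPolynomial ι R) : polyDiv p = ∑ i, pderiv i (p i) := by
  simp [polyDiv]

theorem coeff_polyDiv_polyKoszul (r : MvPolynomial ι R) (m : ι →₀ ℕ) :
    coeff m (polyDiv (polyKoszul r)) = coeff m r * (∑ i, (m i + 1) : ℕ) := by
  simp only [polyDiv_apply, polyKoszul, LinearMap.pi_apply, LinearMap.mulRight_apply, coeff_sum,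
    coeff_pderiv, coeff_mul_X, Nat.cast_sum, Nat.cast_add_one, Finset.mul_sum]

theorem disjoint_ker_polyDiv_range_polyKoszul [NoZeroDivisors R] [CharZero R] :
    Disjoint (polyDiv (ι := ι) (R := R)).ker polyKoszul.range := by
  refine Submodule.disjoint_def.mpr ?_
  rintro _ hdiv ⟨r, rfl⟩
  ext1 i
  have hr : r = 0 := by
    ext m
    have hpos : 0 < ∑ j, (m j + 1) := Finset.sum_pos (fun j _ => (m j).succ_pos) ⟨i, by simp⟩
    have hm := coeff_polyDiv_polyKoszul r m
    rw [LinearMap.mem_ker.mp hdiv, coeff_zero, eq_comm, mul_eq_zero] at hm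
    exact hm.resolve_right (mod_cast hpos.ne')
  rw [hr, map_zero]

end DivergenceAndKoszul

section Evaluation

variable {ι : Type*}

theorem eq_zero_of_eval_eq_zero_on_isOpen [Finite ι] {R : Type*} [CommRing R] [IsDomain R]
    [TopologicalSpace R] [T1Space R] [∀ a : R, (nhdsWithin a {a}ᶜ).NeBot] {U : Set (ι → R)}
    (hU : IsOpen U) (hne : U.Nonempty) {p : MvPolynomial ι R} (hp : ∀ x ∈ U, eval x p = 0) :
    p = 0 := by
  obtain ⟨a, ha⟩ := hne
  obtain ⟨s, hs, hsU⟩ := isOpen_pi_iff'.mp hU a ha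
  refine funext_set s (fun i => infinite_of_mem_nhds (a i) ((hs i).1.mem_nhds (hs i).2))
    fun x hx => ?_
  rw [hp x (hsU hx), map_zero]

/-- Evaluation of polynomial vector fields on `ℝ^ι`, linear in the field. For `ι = Fin 3` it unfolds
to `polyVecEval`. -/
noncomputable def polyFieldEval :
    (ι → MvPolynomial ι ℝ) →ₗ[ℝ] EuclideanSpace ℝ ι → EuclideanSpace ℝ ι where
  toFun p x := WithLp.toLp 2 fun i => eval (fun j => x j) (p i)
  map_add' p q := by ext x i; simp
  map_smul' c p := by ext x i; simp [smul_eval]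

theorem polyFieldEval_polyKoszul (r : MvPolynomial ι ℝ) (x : EuclideanSpace ℝ ι) :
    polyFieldEval (polyKoszul r) x = eval (fun j => x j) r • x := by
  ext i
  simp [polyFieldEval, polyKoszul]

theorem continuous_polyFieldEval (p : ι → MvPolynomial ι ℝ) : Continuous (polyFieldEval p) :=
  (PiLp.continuous_toLp 2 _).comp <| continuous_pi fun i =>
    (MvPolynomial.continuous_eval (p i)).comp (by fun_prop)

variable [Fintype ι]

theorem eq_zero_of_polyFieldEval_ae_eq_zero {U : Set (EuclideanSpace ℝ ι)} (hU : IsOpen U)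
    (hne : U.Nonempty) {p : ι → MvPolynomial ι ℝ}
    (hp : polyFieldEval p =ᵐ[volume.restrict U] 0) : p = 0 := by
  have hpU : Set.EqOn (polyFieldEval p) 0 U := Measure.eqOn_open_of_ae_eq hp hU
    (continuous_polyFieldEval p).continuousOn continuousOn_const
  ext1 i
  refine eq_zero_of_eval_eq_zero_on_isOpen (hU.preimage (PiLp.continuous_toLp 2 _))
    (hne.preimage (WithLp.toLp_surjective 2)) fun x hx => ?_
  exact congrArg (· i) (hpU hx)

end Evaluation

theorem memLp_restrict_of_continuous_of_isBounded {X F : Type*} [PseudoMetricSpace X]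
    [ProperSpace X] [MeasurableSpace X] [OpensMeasurableSpace X] [NormedAddCommGroup F]
    {μ : Measure X} [IsFiniteMeasureOnCompacts μ] {p : ENNReal} {f : X → F} (hf : Continuous f)
    {K : Set X} (hK : Bornology.IsBounded K) : MemLp f p (μ.restrict K) := by
  have hcompact := hK.isCompact_closure
  have : Fact (μ (closure K) < ⊤) := ⟨hcompact.measure_lt_top⟩
  obtain ⟨C, hC⟩ := hcompact.exists_bound_of_continuousOn hf.continuousOn
  have hclosure : MemLp f p (μ.restrict (closure K)) :=
    MemLp.of_bound hf.aestronglyMeasurable C <|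
      (ae_restrict_iff' isClosed_closure.measurableSet).mpr (.of_forall hC)
  exact hclosure.mono_measure (Measure.restrict_mono subset_closure le_rfl)

section Curl

/-- The operator `polyCurl` as a linear map. -/
noncomputable def polyCurlₗ :
    (Fin 3 → MvPolynomial (Fin 3) ℝ) →ₗ[ℝ] Fin 3 → MvPolynomial (Fin 3) ℝ where
  toFun := polyCurl
  map_add' v w := by
    ext1 i
    fin_cases i <;> simp [polyCurl] <;> ring
  map_smul' c w := by
    ext1 i
    fin_cases i <;> simp [polyCurl, smul_sub]

theorem range_polyCurlₗ_le_ker_polyDiv : polyCurlₗ.range ≤ polyDiv.ker := by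
  rintro _ ⟨w, rfl⟩
  change polyDiv (polyCurl w) = 0
  simp only [polyDiv_apply, Fin.sum_univ_three, polyCurl, Matrix.cons_val, map_sub]
  rw [pderiv_pderiv_comm 0 1, pderiv_pderiv_comm 0 2, pderiv_pderiv_comm 1 2]
  ring

/-- The space `curl (P^k)³` of curls of the polynomial vector fields on `ℝ³` whose components have
total degree at most `k`. -/
noncomputable def curlSpace (k : ℕ) : Submodule ℝ (Fin 3 → MvPolynomial (Fin 3) ℝ) :=
  (Submodule.pi Set.univ fun _ => restrictTotalDegree (Fin 3) ℝ k).map polyCurlₗ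

instance finiteDimensional_curlSpace (k : ℕ) : FiniteDimensional ℝ (curlSpace k) :=
  Module.Finite.iff_fg.mpr <|
    (Submodule.fg_pi fun _ => Module.Finite.iff_fg.mp inferInstance).map polyCurlₗ

theorem polyCurl_mem_curlSpace {k : ℕ} {w : Fin 3 → MvPolynomial (Fin 3) ℝ}
    (hw : ∀ i, (w i).totalDegree ≤ k) : polyCurl w ∈ curlSpace k :=
  Submodule.mem_map_of_mem (f := polyCurlₗ) fun i _ => (mem_restrictTotalDegree _ _ _).mpr (hw i)

theorem curlSpace_le_ker_polyDiv (k : ℕ) : curlSpace k ≤ polyDiv.ker :=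
  LinearMap.map_le_range.trans range_polyCurlₗ_le_ker_polyDiv

end Curl

theorem curl_koszul_projection_bound_general {ι : Type*} [Fintype ι]
    {V : Submodule ℝ (ι → MvPolynomial ι ℝ)} [FiniteDimensional ℝ V] (hV : V ≤ polyDiv.ker)
    (W : Submodule ℝ (MvPolynomial ι ℝ)) [FiniteDimensional ℝ W]
    {U K : Set (EuclideanSpace ℝ ι)} (hU : IsOpen U) (hne : U.Nonempty)
    (hK : Bornology.IsBounded K) (hUK : U ⊆ K) :
    ∃ α : ℝ, 0 ≤ α ∧ α < 1 ∧ ∀ μ : Measure (EuclideanSpace ℝ ι),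
      volume.restrict U ≤ μ → μ ≤ volume.restrict K → ∀ v ∈ V, ∀ r ∈ W,
        |∫ x, ⟪polyFieldEval v x, eval (fun j => x j) r • x⟫_ℝ ∂μ| ≤
          α * √(∫ x, ‖polyFieldEval v x‖ ^ 2 ∂μ) *
            √(∫ x, ‖eval (fun j => x j) r • x‖ ^ 2 ∂μ) := by
  have hdisj : Disjoint V (W.map polyKoszul) :=
    disjoint_ker_polyDiv_range_polyKoszul.mono hV LinearMap.map_le_range
  obtain ⟨α, hα₀, hα₁, hα⟩ := exists_uniform_abs_integral_inner_le_of_disjoint hdisj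
    (Measure.restrict_mono hUK le_rfl)
    (fun p => memLp_restrict_of_continuous_of_isBounded (continuous_polyFieldEval p) hK)
    (fun _ hp => eq_zero_of_polyFieldEval_ae_eq_zero hU hne hp)
  refine ⟨α, hα₀, hα₁, fun μ h₀ h₁ v hv r hr => ?_⟩
  simpa only [polyFieldEval_polyKoszul] using
    hα μ h₀ h₁ v hv (polyKoszul r) (Submodule.mem_map_of_mem hr)

/-- Uniform bound `‖π_R π_{Rᶜ}‖ ≤ α < 1` for the `L²(T)`-orthogonal
projections onto the curl space `R^ℓ(T) = curl (P^{ℓ+1})³` and its Koszul complement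
`Rᶜ,ℓ(T) = x P^{ℓ−1}`, in normalized bilinear form: for every measurable `T` with
`B(0,ρ) ⊆ T ⊆ B(0,1)`, every polynomial vector field `w` of component degree `≤ ℓ+1` and
every polynomial `r` of total degree `≤ ℓ−1`,
`|∫_T ⟨curl w, r x⟩| ≤ α (∫_T ‖curl w‖²)^{1/2} (∫_T ‖r x‖²)^{1/2}`. -/
theorem curl_koszul_projection_bound (ℓ : ℕ) (hℓ : 1 ≤ ℓ) (ρ : ℝ) (hρ0 : 0 < ρ) (hρ1 : ρ < 1) :
    ∃ α : ℝ, 0 ≤ α ∧ α < 1 ∧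
      ∀ T : Set (EuclideanSpace ℝ (Fin 3)), MeasurableSet T →
        Metric.ball 0 ρ ⊆ T → T ⊆ Metric.ball 0 1 →
        ∀ w : Fin 3 → MvPolynomial (Fin 3) ℝ, (∀ i, (w i).totalDegree ≤ ℓ + 1) →
        ∀ r : MvPolynomial (Fin 3) ℝ, r.totalDegree ≤ ℓ - 1 →
          abs (∫ x in T, ⟪polyVecEval (polyCurl w) x, (eval (fun j => x j) r) • x⟫_ℝ) ≤
            α * Real.sqrt (∫ x in T, ‖polyVecEval (polyCurl w) x‖ ^ 2) *
              Real.sqrt (∫ x in T, ‖(eval (fun j => x j) r) • x‖ ^ 2) := by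
  obtain ⟨α, hα₀, hα₁, hα⟩ := curl_koszul_projection_bound_general
    (curlSpace_le_ker_polyDiv (ℓ + 1)) (restrictTotalDegree (Fin 3) ℝ (ℓ - 1)) Metric.isOpen_ball
    (Metric.nonempty_ball.mpr hρ0) Metric.isBounded_ball (Metric.ball_subset_ball hρ1.le)
  exact ⟨α, hα₀, hα₁, fun T _ hρT hT w hw r hr => hα (volume.restrict T)
    (Measure.restrict_mono hρT le_rfl) (Measure.restrict_mono hT le_rfl) (polyCurl w)
    (polyCurl_mem_curlSpace hw) r ((mem_restrictTotalDegree _ _ _).mpr hr)⟩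
end
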